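/- arXiv:2308.01182 — 2 statements merged into one kernel-verified Lean document; each statement's English description precedes it below -/
import Mathlib

section
/- Let G be an abelian group of twice odd order, A a Schur ring over G, Q the least A-subgroup of even order, K the largest A-subgroup of odd order, and L = Q ∩ K. Then Q ∖ L is a basic set of A, and A is the K/L-wreath product (every basic set of A outside K is a union of L-cosets). -/
open scoped Pointwise

noncomputable def clsum {G : Type*} [Group G] [Fintype G] (s : Set G) :
    MonoidAlgebra ℤ G :=
  ∑ x ∈ s.toFinite.toFinset, MonoidAlgebra.of ℤ G x

structure SchurRing (G : Type*) [Group G] [Fintype G] where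
  P : Set (Set G)
  one_mem : ({(1 : G)} : Set G) ∈ P
  nonempty_cls : ∀ X ∈ P, X.Nonempty
  cover : ∀ g : G, ∃ X ∈ P, g ∈ X
  disj : ∀ X ∈ P, ∀ Y ∈ P, X ≠ Y → Disjoint X Y
  inv_mem : ∀ X ∈ P, X⁻¹ ∈ P
  mul_closed : ∀ X ∈ P, ∀ Y ∈ P,
    clsum X * clsum Y ∈ Submodule.span ℤ (clsum '' P)

def SchurRing.isASet {G : Type*} [Group G] [Fintype G] (A : SchurRing G) (X : Set G) : Prop :=
  clsum X ∈ Submodule.span ℤ (clsum '' A.P)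

/-!
Let `t` be the unique involution of `G`, and let `q = 2 ^ n` be congruent to `1` modulo the odd
part of `|G|`, so that `x ↦ x ^ q` maps `x` to whichever of `x` and `t * x` has odd order. Modulo
`2`, the `q`-th power of the sum of an `A`-set `X` is the sum of the `q`-th powers of its elements,
hence the set `W` of elements `g` of odd order such that exactly one of `g`, `t * g` lies in `X` is
an `A`-set, and `W ⊆ K` because `W` generates an `A`-subgroup of odd order.

If moreover `X` is disjoint from `K`, then `N = X ∪ W` is invariant under `t`. The stabilizer of the
`A`-set `N` is an `A`-subgroup, and it has even order, so it contains `Q`. Therefore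
`Q * X ⊆ X ∪ K`. Both claims are instances of this: the first for the basic set of `t`, the second
for an arbitrary basic set outside `K`.
-/

open Classical in
lemma coeff_clsum {G : Type*} [Group G] [Fintype G] (X : Set G) (g : G) :
    (clsum X).coeff g = if g ∈ X then 1 else 0 := by
  simp [clsum, MonoidAlgebra.of_apply, MonoidAlgebra.coeff_single, Finsupp.single_apply]

lemma coeff_clsum_mul_clsum {G : Type*} [Group G] [Fintype G] (X Y : Set G) (g : G) :
    (clsum X * clsum Y).coeff g = (X ∩ g • Y⁻¹).ncard := by
  classical
  rw [MonoidAlgebra.coeff_mul_apply_left, Finsupp.sum_fintype _ _ (by simp)]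
  simp only [coeff_clsum, ← ite_and, mul_ite, mul_one, mul_zero]
  rw [Finset.sum_boole, ← Set.ncard_coe_finset]
  congr 2
  ext x
  simp [Set.mem_smul_set_iff_inv_smul_mem, and_comm]

lemma coeff_clsum_pow_prime_pow {G : Type*} [CommGroup G] [Fintype G] (p n : ℕ)
    [Fact p.Prime] (X : Set G) (g : G) :
    (((clsum X ^ p ^ n).coeff g : ℤ) : ZMod p) = {x ∈ X | x ^ p ^ n = g}.ncard := by
  classical
  have : CharP (MonoidAlgebra (ZMod p) G) p :=
    charP_of_injective_algebraMap (FaithfulSMul.algebraMap_injective (ZMod p) _) p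
  have hmap : MonoidAlgebra.mapRingHom G (Int.castRingHom (ZMod p)) (clsum X ^ p ^ n) =
      ∑ x ∈ X.toFinite.toFinset, MonoidAlgebra.single (x ^ p ^ n) 1 := by
    simp [clsum, MonoidAlgebra.of_apply, sum_pow_char_pow, MonoidAlgebra.single_pow]
  calc (((clsum X ^ p ^ n).coeff g : ℤ) : ZMod p)
      = (MonoidAlgebra.mapRingHom G (Int.castRingHom (ZMod p)) (clsum X ^ p ^ n)).coeff g := by
        rw [MonoidAlgebra.coeff_mapRingHom, eq_intCast]
    _ = {x ∈ X | x ^ p ^ n = g}.ncard := by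
        rw [hmap, MonoidAlgebra.coeff_sum, Finsupp.finsetSum_apply]
        simp only [MonoidAlgebra.coeff_single, Finsupp.single_apply]
        rw [Finset.sum_boole, ← Set.ncard_coe_finset]
        simp

/-- The set of `g` for which the number of `p ^ n`-th roots of `g` in `X` is prime to `p`. For
`n = 1` this is the set denoted `X^[p]` in the theory of Schur rings. -/
def primePowSet {G : Type*} [Monoid G] (p n : ℕ) (X : Set G) : Set G :=
  {g | ¬ p ∣ {x ∈ X | x ^ p ^ n = g}.ncard}

lemma primePowSet_subset_range {G : Type*} [CommGroup G] (p n : ℕ) (X : Set G) :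
    primePowSet p n X ⊆ (powMonoidHom (p ^ n) : G →* G).range := by
  intro g hg
  obtain ⟨x, -, hx⟩ := Set.nonempty_of_ncard_ne_zero fun h => hg (h ▸ dvd_zero p)
  exact ⟨x, hx⟩

lemma exists_forall_orderOf_eq_two_iff {G : Type*} [CommGroup G] [Finite G] {m : ℕ} (hm : Odd m)
    (hG : Nat.card G = 2 * m) : ∃ t : G, ∀ x, orderOf x = 2 ↔ x = t := by
  obtain ⟨t, ht⟩ := exists_prime_orderOf_dvd_card' (G := G) 2 (hG ▸ dvd_mul_right 2 m)
  refine ⟨t, fun x => ⟨fun hx => ?_, fun hx => hx ▸ ht⟩⟩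
  have hindex : (Subgroup.zpowers t).index = m := by
    have := (Subgroup.zpowers t).index_mul_card
    rw [Nat.card_zpowers, ht, hG] at this
    lia
  have hxm : x ^ m = x := by
    have := pow_mod_orderOf x m
    rw [hx, Nat.odd_iff.1 hm, pow_one] at this
    exact this.symm
  have hmem : x ∈ Subgroup.zpowers t := by
    rw [← hxm, ← hindex]
    exact Subgroup.pow_index_mem _ x
  obtain ⟨k, rfl⟩ := Subgroup.mem_zpowers_iff.1 hmem
  have hk := zpow_mod_orderOf t k
  rw [ht] at hk
  rcases Int.emod_two_eq_zero_or_one k with h | h <;> simp only [h, Nat.cast_ofNat] at hk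
  · rw [← hk] at hx
    simp at hx
  · simpa using hk.symm

lemma even_natCard_iff_mem {G : Type*} [Group G] [Finite G] {t : G}
    (ht : ∀ x, orderOf x = 2 ↔ x = t) (H : Subgroup G) : Even (Nat.card H) ↔ t ∈ H := by
  rw [even_iff_two_dvd]
  constructor
  · intro hH
    obtain ⟨x, hx⟩ := exists_prime_orderOf_dvd_card' (G := H) 2 hH
    rw [← Subgroup.orderOf_coe] at hx
    rw [← (ht x).1 hx]
    exact x.2
  · intro htH
    rw [← (ht t).2 rfl]
    exact H.orderOf_dvd_natCard htH

lemma exists_pow_two_pow_eq_or {G : Type*} [Group G] [Finite G] {m : ℕ} (hm : Odd m)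
    (hG : Nat.card G = 2 * m) {t : G} (ht : ∀ x, orderOf x = 2 ↔ x = t) :
    ∃ n ≠ 0, ∀ x : G, x ^ 2 ^ n = x ∨ x ^ 2 ^ n = t * x := by
  refine ⟨m.totient, (Nat.totient_pos.2 hm.pos).ne', fun x => ?_⟩
  have hdvd : m ∣ 2 ^ m.totient - 1 :=
    (Nat.modEq_iff_dvd' Nat.one_le_two_pow).1 (Nat.ModEq.pow_totient hm.coprime_two_left).symm
  have hsq : (x ^ (2 ^ m.totient - 1)) ^ 2 = 1 := by
    rw [← pow_mul, mul_comm]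
    exact orderOf_dvd_iff_pow_eq_one.1
      ((orderOf_dvd_natCard x).trans (hG ▸ mul_dvd_mul_left 2 hdvd))
  have hpow : x ^ 2 ^ m.totient = x ^ (2 ^ m.totient - 1) * x := by
    rw [← pow_succ, Nat.sub_add_cancel Nat.one_le_two_pow]
  rw [hpow]
  by_cases h1 : x ^ (2 ^ m.totient - 1) = 1
  · left; rw [h1, one_mul]
  · right; rw [(ht _).1 (orderOf_eq_prime hsq h1)]

section TwoPowIdempotent

variable {G : Type*} [CommGroup G] {t : G} {n : ℕ}

lemma pow_two_pow_eq_iff (ht : orderOf t = 2) (hn : n ≠ 0)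
    (hpow : ∀ x : G, x ^ 2 ^ n = x ∨ x ^ 2 ^ n = t * x) {x y : G} :
    x ^ 2 ^ n = y ^ 2 ^ n ↔ x = y ∨ x = t * y := by
  have htt : t * t = 1 := by rw [← pow_two, ← ht, pow_orderOf_eq_one]
  have htn : t ^ 2 ^ n = 1 := by
    rw [← orderOf_dvd_iff_pow_eq_one, ht]
    exact dvd_pow_self 2 hn
  constructor
  · intro hxy
    rcases hpow x with hx | hx <;> rcases hpow y with hy | hy <;> rw [hx, hy] at hxy
    · exact .inl hxy
    · exact .inr hxy
    · right; rw [← hxy, ← mul_assoc, htt, one_mul]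
    · exact .inl (mul_left_cancel hxy)
  · rintro (rfl | rfl)
    · rfl
    · rw [mul_pow, htn, one_mul]

lemma pow_mem_primePowSet_two_iff (ht : orderOf t = 2) (hn : n ≠ 0)
    (hpow : ∀ x : G, x ^ 2 ^ n = x ∨ x ^ 2 ^ n = t * x) (X : Set G) (y : G) :
    y ^ 2 ^ n ∈ primePowSet 2 n X ↔ ¬ (y ∈ X ↔ t * y ∈ X) := by
  have hfiber : {x ∈ X | x ^ 2 ^ n = y ^ 2 ^ n} = {y, t * y} ∩ X := by
    ext x
    simp [pow_two_pow_eq_iff ht hn hpow, and_comm]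
  have hne : y ≠ t * y := by
    intro h
    have ht1 : t = 1 := mul_eq_right.1 h.symm
    simp [ht1] at ht
  rw [primePowSet, Set.mem_ofPred_eq, hfiber]
  by_cases hy : y ∈ X <;> by_cases hty : t * y ∈ X <;>
    simp [hy, hty, hne, Set.insert_inter_of_mem, Set.insert_inter_of_notMem]

lemma notMem_range_pow_two_pow (ht : orderOf t = 2) (hn : n ≠ 0)
    (hpow : ∀ x : G, x ^ 2 ^ n = x ∨ x ^ 2 ^ n = t * x) :
    t ∉ (powMonoidHom (2 ^ n) : G →* G).range := by
  rintro ⟨x, hx⟩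
  rw [powMonoidHom_apply] at hx
  have htn : t ^ 2 ^ n = 1 := by
    simpa using (pow_two_pow_eq_iff ht hn hpow (y := 1)).2 (.inr (mul_one t).symm)
  have hidem : t ^ 2 ^ n = t := by
    simpa only [hx] using (pow_two_pow_eq_iff ht hn hpow).2 (hpow x)
  have ht1 : t = 1 := hidem.symm.trans htn
  simp [ht1] at ht

end TwoPowIdempotent

namespace SchurRing

section Group

variable {G : Type*} [Group G] [Fintype G]

/-- The basic set of `A` containing `g`. -/
noncomputable def basicSet (A : SchurRing G) (g : G) : Set G :=
  (A.cover g).choose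

/-- The Schur ring `A` as a subalgebra of the group ring `ℤ[G]`, spanned by the sums of the basic
sets. -/
noncomputable def toSubalgebra (A : SchurRing G) : Subalgebra ℤ (MonoidAlgebra ℤ G) :=
  (Submodule.span ℤ (clsum '' A.P)).toSubalgebra
    (Submodule.subset_span ⟨{1}, A.one_mem, by
      simp only [clsum, Set.Finite.toFinset_singleton, Finset.sum_singleton, map_one]⟩)
    (fun a b ha hb => by
      have hab := Submodule.mul_mem_mul ha hb
      rw [Submodule.span_mul_span] at hab
      refine Submodule.span_le.2 ?_ hab
      rintro _ ⟨_, ⟨X, hX, rfl⟩, _, ⟨Y, hY, rfl⟩, rfl⟩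
      exact A.mul_closed X hX Y hY)

variable {A : SchurRing G} {X Y : Set G} {g h : G}

lemma basicSet_mem (A : SchurRing G) (g : G) : A.basicSet g ∈ A.P :=
  (A.cover g).choose_spec.1

lemma mem_basicSet_self (A : SchurRing G) (g : G) : g ∈ A.basicSet g :=
  (A.cover g).choose_spec.2

lemma basicSet_eq_of_mem (hX : X ∈ A.P) (hg : g ∈ X) : A.basicSet g = X := by
  by_contra hne
  exact Set.disjoint_left.1 (A.disj _ (A.basicSet_mem g) X hX hne) (A.mem_basicSet_self g) hg

lemma mem_iff_of_mem_basicSet (hX : X ∈ A.P) (hh : h ∈ A.basicSet g) : h ∈ X ↔ g ∈ X := by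
  have hgh : A.basicSet h = A.basicSet g := basicSet_eq_of_mem (A.basicSet_mem g) hh
  constructor <;> intro hmem
  · rw [← basicSet_eq_of_mem hX hmem, hgh]
    exact A.mem_basicSet_self g
  · rwa [← basicSet_eq_of_mem hX hmem]

lemma basicSet_one (A : SchurRing G) : A.basicSet 1 = {1} :=
  basicSet_eq_of_mem A.one_mem rfl

lemma basicSet_inv (A : SchurRing G) (g : G) : A.basicSet g⁻¹ = (A.basicSet g)⁻¹ :=
  basicSet_eq_of_mem (A.inv_mem _ (A.basicSet_mem g)) (Set.inv_mem_inv.2 (A.mem_basicSet_self g))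

lemma mem_toSubalgebra_iff {f : MonoidAlgebra ℤ G} :
    f ∈ A.toSubalgebra ↔ ∀ g, ∀ h ∈ A.basicSet g, f.coeff h = f.coeff g := by
  classical
  constructor
  · intro (hf : f ∈ Submodule.span ℤ (clsum '' A.P)) g h hh
    induction hf using Submodule.span_induction with
    | mem _ hf =>
      obtain ⟨X, hX, rfl⟩ := hf
      simp only [coeff_clsum, mem_iff_of_mem_basicSet hX hh]
    | zero => simp
    | add f₁ f₂ _ _ h₁ h₂ => simp [h₁, h₂]
    | smul c f _ hf => simp only [MonoidAlgebra.coeff_smul_apply, hf]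
  · intro hf
    choose r hr using A.nonempty_cls
    have hsum : f = ∑ C : A.P, f.coeff (r C C.2) • clsum (C : Set G) := by
      ext g
      rw [MonoidAlgebra.coeff_sum, Finsupp.finsetSum_apply,
        Finset.sum_eq_single ⟨A.basicSet g, A.basicSet_mem g⟩]
      · rw [MonoidAlgebra.coeff_smul_apply, coeff_clsum, if_pos (A.mem_basicSet_self g),
          smul_eq_mul, mul_one, hf g _ (hr _ (A.basicSet_mem g))]
      · intro C _ hC
        have hgC : g ∉ (C : Set G) := fun hg => hC (Subtype.ext (basicSet_eq_of_mem C.2 hg).symm)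
        rw [MonoidAlgebra.coeff_smul_apply, coeff_clsum, if_neg hgC, smul_zero]
      · simp
    rw [hsum]
    exact sum_mem fun C _ => A.toSubalgebra.smul_mem (Submodule.subset_span ⟨C, C.2, rfl⟩) _

lemma isASet_iff_clsum_mem : A.isASet X ↔ clsum X ∈ A.toSubalgebra :=
  Iff.rfl

lemma isASet_iff : A.isASet X ↔ ∀ g ∈ X, A.basicSet g ⊆ X := by
  classical
  rw [isASet_iff_clsum_mem, mem_toSubalgebra_iff]
  simp only [coeff_clsum]
  constructor
  · intro hX g hg h hh
    by_contra hhX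
    simpa [hg, hhX] using hX g h hh
  · intro hX g h hh
    have hgh : A.basicSet h = A.basicSet g := basicSet_eq_of_mem (A.basicSet_mem g) hh
    have hiff : h ∈ X ↔ g ∈ X :=
      ⟨fun hhX => hX h hhX (hgh ▸ A.mem_basicSet_self g), fun hgX => hX g hgX hh⟩
    simp only [hiff]

lemma isASet_of_mem (hX : X ∈ A.P) : A.isASet X :=
  Submodule.subset_span ⟨X, hX, rfl⟩

lemma isASet_setOf_coeff {f : MonoidAlgebra ℤ G} (hf : f ∈ A.toSubalgebra) (p : ℤ → Prop) :
    A.isASet {g | p (f.coeff g)} := by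
  refine isASet_iff.2 fun g (hg : p (f.coeff g)) h hh => ?_
  rwa [Set.mem_ofPred_eq, mem_toSubalgebra_iff.1 hf g h hh]

namespace isASet

lemma union (hX : A.isASet X) (hY : A.isASet Y) : A.isASet (X ∪ Y) := by
  rw [isASet_iff] at *
  rintro g (hg | hg)
  · exact (hX g hg).trans Set.subset_union_left
  · exact (hY g hg).trans Set.subset_union_right

lemma compl (hX : A.isASet X) : A.isASet Xᶜ := by
  classical
  simpa [coeff_clsum, Set.compl_def] using isASet_setOf_coeff hX (· = 0)

lemma inv (hX : A.isASet X) : A.isASet X⁻¹ := by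
  rw [isASet_iff] at *
  intro g hg
  rw [← inv_inv g, basicSet_inv]
  exact Set.inv_subset_inv.2 (hX g⁻¹ hg)

end isASet

lemma isASet.mul (hX : A.isASet X) (hY : A.isASet Y) : A.isASet (X * Y) := by
  convert isASet_setOf_coeff (A.toSubalgebra.mul_mem hX hY) (· ≠ 0) using 1
  ext g
  rw [Set.mem_ofPred_eq, coeff_clsum_mul_clsum, Nat.cast_ne_zero, ne_eq, Set.ncard_eq_zero,
    ← ne_eq, ← Set.nonempty_iff_ne_empty, Set.inter_comm, Set.smul_inter_nonempty_iff, Set.mem_mul]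
  constructor
  · rintro ⟨x, hx, y, hy, rfl⟩
    exact ⟨x, y⁻¹, ⟨hx, Set.inv_mem_inv.2 hy⟩, by rw [inv_inv]⟩
  · rintro ⟨x, y, ⟨hx, hy⟩, rfl⟩
    exact ⟨x, hx, y⁻¹, hy, rfl⟩

lemma basicSet_mul_subset (A : SchurRing G) (g h : G) :
    A.basicSet (g * h) ⊆ A.basicSet g * A.basicSet h :=
  isASet_iff.1 ((isASet_of_mem (A.basicSet_mem g)).mul (isASet_of_mem (A.basicSet_mem h))) _
    (Set.mul_mem_mul (A.mem_basicSet_self g) (A.mem_basicSet_self h))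

lemma isASet.closure (hX : A.isASet X) : A.isASet (Subgroup.closure X : Set G) := by
  refine isASet_iff.2 fun g hg => ?_
  induction hg using Subgroup.closure_induction with
  | mem g hg => exact (isASet_iff.1 hX g hg).trans Subgroup.subset_closure
  | one => simp [basicSet_one]
  | mul g h _ _ hg hh =>
    refine (A.basicSet_mul_subset g h).trans ?_
    rintro _ ⟨a, ha, b, hb, rfl⟩
    exact mul_mem (hg ha) (hh hb)
  | inv g _ hg =>
    rw [basicSet_inv]
    exact fun a ha => inv_mem_iff.1 (hg ha)

/-- `g` stabilizes `X` iff its coefficient in `clsum X * clsum X⁻¹` is `|X|`. -/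
lemma isASet.stabilizer (hX : A.isASet X) :
    A.isASet (MulAction.stabilizer G X : Set G) := by
  convert isASet_setOf_coeff (A.toSubalgebra.mul_mem hX hX.inv) (· = X.ncard) using 1
  ext g
  rw [SetLike.mem_coe, MulAction.mem_stabilizer_set_iff_subset_smul_set X.toFinite,
    Set.mem_ofPred_eq, coeff_clsum_mul_clsum, inv_inv, Nat.cast_inj, ← Set.inter_eq_left]
  exact ⟨fun h => by rw [h],
    fun h => Set.eq_of_subset_of_ncard_le Set.inter_subset_left h.ge⟩

end Group

section CommGroup

variable {G : Type*} [CommGroup G] [Fintype G] {A : SchurRing G} {X : Set G}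

lemma isASet_primePowSet (hX : A.isASet X) (p n : ℕ) [Fact p.Prime] :
    A.isASet (primePowSet p n X) := by
  simpa only [primePowSet, coeff_clsum_pow_prime_pow, ne_eq, ZMod.natCast_eq_zero_iff] using
    isASet_setOf_coeff (A.toSubalgebra.pow_mem hX (p ^ n)) (fun c => (c : ZMod p) ≠ 0)

section TwiceOdd

variable {m : ℕ} {t : G} {Q K : Subgroup G}

lemma isASet.primePowSet_two_subset (ht : ∀ x, orderOf x = 2 ↔ x = t)
    (hKmax : ∀ H : Subgroup G, A.isASet (H : Set G) → Odd (Nat.card H) → H ≤ K)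
    {n : ℕ} (hn : n ≠ 0)
    (hpow : ∀ x : G, x ^ 2 ^ n = x ∨ x ^ 2 ^ n = t * x) (hX : A.isASet X) :
    primePowSet 2 n X ⊆ K := by
  rw [← Subgroup.closure_le]
  refine hKmax _ (isASet_primePowSet hX 2 n).closure ?_
  rw [← Nat.not_even_iff_odd, even_natCard_iff_mem ht]
  intro htmem
  exact notMem_range_pow_two_pow ((ht t).2 rfl) hn hpow
    ((Subgroup.closure_le _).2 (primePowSet_subset_range 2 n X) htmem)

lemma isASet.exists_superset_mem_stabilizer (hm : Odd m) (hG : Nat.card G = 2 * m)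
    (ht : ∀ x, orderOf x = 2 ↔ x = t)
    (hKmax : ∀ H : Subgroup G, A.isASet (H : Set G) → Odd (Nat.card H) → H ≤ K)
    (hX : A.isASet X) (hXK : X ⊆ (K : Set G)ᶜ) :
    ∃ N, A.isASet N ∧ t ∈ MulAction.stabilizer G N ∧ X ⊆ N ∧ N ⊆ X ∪ K := by
  obtain ⟨n, hn, hpow⟩ := exists_pow_two_pow_eq_or hm hG ht
  have ht2 : orderOf t = 2 := (ht t).2 rfl
  set W := primePowSet 2 n X
  have hWK : W ⊆ K := hX.primePowSet_two_subset ht hKmax hn hpow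
  have hmemW (y : G) : y ^ 2 ^ n ∈ W ↔ ¬ (y ∈ X ↔ t * y ∈ X) :=
    pow_mem_primePowSet_two_iff ht2 hn hpow X y
  refine ⟨X ∪ W, hX.union (isASet_primePowSet hX 2 n), ?_, Set.subset_union_left,
    Set.union_subset_union_right X hWK⟩
  rw [MulAction.mem_stabilizer_set' (Set.toFinite _)]
  rintro x (hx | hx)
  · by_cases htx : t * x ∈ X
    · exact .inl htx
    · have hxW : x ^ 2 ^ n ∈ W := (hmemW x).2 fun h => htx (h.1 hx)
      rcases hpow x with h | h
      · exact absurd (hWK (h ▸ hxW)) (hXK hx)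
      · exact .inr (by rwa [h] at hxW)
  · obtain ⟨y, rfl⟩ := primePowSet_subset_range 2 n X hx
    have hidem : (y ^ 2 ^ n) ^ 2 ^ n = y ^ 2 ^ n := (pow_two_pow_eq_iff ht2 hn hpow).2 (hpow y)
    have hyX : y ^ 2 ^ n ∉ X := fun h => hXK h (hWK hx)
    by_contra hty
    refine (hmemW (y ^ 2 ^ n)).1 (hidem.symm ▸ hx) ?_
    exact iff_of_false hyX fun h => hty (.inl h)

lemma isASet.mul_mem_union (hm : Odd m) (hG : Nat.card G = 2 * m)
    (hQmin : ∀ H : Subgroup G, A.isASet (H : Set G) → Even (Nat.card H) → Q ≤ H)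
    (hKmax : ∀ H : Subgroup G, A.isASet (H : Set G) → Odd (Nat.card H) → H ≤ K)
    (hX : A.isASet X) (hXK : X ⊆ (K : Set G)ᶜ) {q x : G} (hq : q ∈ Q) (hx : x ∈ X) :
    q * x ∈ X ∪ K := by
  obtain ⟨t, ht⟩ := exists_forall_orderOf_eq_two_iff hm hG
  obtain ⟨N, hN, htN, hXN, hNX⟩ := hX.exists_superset_mem_stabilizer hm hG ht hKmax hXK
  have hQN : Q ≤ MulAction.stabilizer G N :=
    hQmin _ hN.stabilizer ((even_natCard_iff_mem ht _).2 htN)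
  exact hNX ((MulAction.mem_stabilizer_set.1 (hQN hq) x).2 (hXN hx))

end TwiceOdd

end CommGroup

end SchurRing

theorem stmt13 {G : Type*} [CommGroup G] [Fintype G]
    (htwiceodd : ∃ m : ℕ, Odd m ∧ Fintype.card G = 2 * m)
    (A : SchurRing G) (Q K : Subgroup G)
    (hQ : A.isASet (Q : Set G)) (hQeven : Even (Nat.card Q))
    (hQmin : ∀ Q' : Subgroup G, A.isASet (Q' : Set G) → Even (Nat.card Q') → Q ≤ Q')
    (hK : A.isASet (K : Set G)) (hKodd : Odd (Nat.card K))
    (hKmax : ∀ K' : Subgroup G, A.isASet (K' : Set G) → Odd (Nat.card K') → K' ≤ K) :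
    ((Q : Set G) \ ((Q ⊓ K : Subgroup G) : Set G)) ∈ A.P ∧
    (∀ X ∈ A.P, X ⊆ (K : Set G)ᶜ →
      ∀ x ∈ X, ∀ l ∈ (Q ⊓ K : Subgroup G), l * x ∈ X) := by
  obtain ⟨m, hm, hG⟩ := htwiceodd
  rw [← Nat.card_eq_fintype_card] at hG
  obtain ⟨t, ht⟩ := exists_forall_orderOf_eq_two_iff hm hG
  have htQ : t ∈ Q := (even_natCard_iff_mem ht Q).1 hQeven
  have htK : t ∉ K := by rwa [← even_natCard_iff_mem ht, Nat.not_even_iff_odd]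
  have hTQ : A.basicSet t ⊆ Q := SchurRing.isASet_iff.1 hQ t htQ
  have hTK : A.basicSet t ⊆ (K : Set G)ᶜ := SchurRing.isASet_iff.1 hK.compl t htK
  constructor
  · suffices hQL : (Q : Set G) \ (Q ⊓ K : Subgroup G) = A.basicSet t from
      hQL ▸ A.basicSet_mem t
    refine Set.Subset.antisymm (fun q ⟨hq, hqL⟩ => ?_) fun x hx => ⟨hTQ hx, fun hxL => hTK hx hxL.2⟩
    have hqt : q * t⁻¹ * t ∈ A.basicSet t ∪ K :=
      (SchurRing.isASet_of_mem (A.basicSet_mem t)).mul_mem_union hm hG hQmin hKmax hTK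
        (mul_mem hq (inv_mem htQ)) (A.mem_basicSet_self t)
    rw [inv_mul_cancel_right] at hqt
    exact hqt.resolve_right fun hqK => hqL ⟨hq, hqK⟩
  · intro X hX hXK x hx l hl
    refine ((SchurRing.isASet_of_mem hX).mul_mem_union hm hG hQmin hKmax hXK hl.1
      hx).resolve_right fun hlx => hXK hx ?_
    exact (Subgroup.mul_mem_cancel_left K hl.2).1 hlx
end

section
/- Let G = H × ⟨a⟩ where H is cyclic of order 2n with n > 1 odd, b the unique involution of H, and a of order 2. Let A be a Schur ring over G with Σ_{h∈H} h ∈ A and {a} not an A-set, and let T be the basic set of A containing a. Then T has one of the forms La, La ∪ Lab, or Ma ∪ (M∖L)ab, for subgroups 1 ≤ L < M ≤ H₀, where H₀ is the subgroup of H of order n. -/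
open scoped Pointwise

/-- For X ⊆ H, the subset Xa = {(x,a) : x ∈ X} of G = H × ⟨a⟩. -/
def cosetA {H : Type*} (X : Set H) : Set (H × Multiplicative (ZMod 2)) :=
  (fun h => (h, Multiplicative.ofAdd (1 : ZMod 2))) '' X

/-!
Identify both cosets of `H` with `H`, so that `T = Ua` with `1 ∈ U ⊆ H`. Powers modulo a prime
relate the coefficients of `(Ua) ^ p` to the `p`-th powers of the elements of `U`, and every
element of the Schur ring supported on `Ha` is constant on `U`. For primes `p` not dividing `|H|`
this shows that `U` is a union of classes of elements of equal order. If no `e ∈ U` has odd prime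
order, then `p`-th powers for odd primes `p` dividing `|H|` show that `U` is contained in the
subgroup of order two. If `e ∈ U` has odd prime order `p`, then `e` stabilizes the union `X` of
`U` and the set `Q` of elements outside `U` whose coefficient in `(Ua) ^ p` is not divisible by
`p`. Passing to the quotient by the stabilizer `N` of `X` and using induction, the image of `U`
is a subgroup or a subgroup minus a coset of order two, while `U ∩ N` is `N` or `N` minus a coset
of order two. A coset cannot be missing twice since `4 ∤ |H|`, so `U` itself has one of these two
shapes.
-/

/-! ### Orders of elements in cyclic groups -/

section Group

variable {G : Type*} [Group G]

theorem mem_of_pow_mem_of_coprime_orderOf {K : Subgroup G} {x : G} {n : ℕ}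
    (hn : n.Coprime (orderOf x)) (hx : x ^ n ∈ K) : x ∈ K := by
  obtain ⟨m, hm⟩ := exists_pow_eq_self_of_coprime hn
  exact hm ▸ K.pow_mem hx m

theorem two_dvd_card_of_sq_mem {K V : Subgroup G} {c : G} (hcK : c ∈ K) (hcV : c ∉ V)
    (hc : c ^ 2 ∈ V) : 2 ∣ Nat.card K := by
  by_contra hodd
  have hcop : Nat.Coprime 2 (orderOf c) :=
    ((Nat.prime_two.coprime_iff_not_dvd).2 hodd).coprime_dvd_right (K.orderOf_dvd_natCard hcK)
  exact hcV (mem_of_pow_mem_of_coprime_orderOf hcop hc)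

theorem exists_pow_prime_eq_of_not_dvd_orderOf {p : ℕ} (hp : p.Prime) {x : G}
    (hx : ¬ p ∣ orderOf x) : ∃ y, y ^ p = x ∧ orderOf y = orderOf x := by
  obtain ⟨m, hm⟩ := exists_pow_eq_self_of_coprime (hp.coprime_iff_not_dvd.2 hx)
  have hroot : (x ^ m) ^ p = x := by rw [← pow_mul, mul_comm, pow_mul, hm]
  refine ⟨x ^ m, hroot, Nat.dvd_antisymm (orderOf_pow_dvd m) ?_⟩
  simpa only [hroot] using orderOf_pow_dvd (x := x ^ m) p

theorem orderOf_eq_mul_orderOf_pow {n : ℕ} (hn : n ≠ 0) {x : G} (hx : n ∣ orderOf x) :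
    orderOf x = n * orderOf (x ^ n) := by
  rw [orderOf_pow_of_dvd hn hx, Nat.mul_div_cancel' hx]

end Group

section CommGroup

variable {G : Type*} [CommGroup G]

theorem orderOf_mul_of_pow_prime_eq_one {p : ℕ} (hp : p.Prime) {y z : G}
    (hy : ¬ p ∣ orderOf y) (hz : z ^ p = 1) (hz₁ : z ≠ 1) : orderOf (y * z) = orderOf y * p := by
  have := Fact.mk hp
  have hzp : orderOf z = p := orderOf_eq_prime hz hz₁
  have hcop : (orderOf y).Coprime (orderOf z) := hzp ▸ (hp.coprime_iff_not_dvd.2 hy).symm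
  rw [(Commute.all y z).orderOf_mul_eq_mul_orderOf_of_coprime hcop, hzp]

theorem not_dvd_orderOf_of_mem_closure {p : ℕ} (hp : p.Prime) {S : Set G}
    (hS : ∀ x ∈ S, ¬ p ∣ orderOf x) {x : G} (hx : x ∈ Subgroup.closure S) :
    ¬ p ∣ orderOf x := by
  induction hx using Subgroup.closure_induction with
  | mem x hx => exact hS x hx
  | one => simpa only [orderOf_one, Nat.dvd_one] using hp.ne_one
  | mul x y _ _ ihx ihy =>
    intro hdvd
    have := hdvd.trans (Commute.all x y).orderOf_mul_dvd_mul_orderOf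
    exact (hp.dvd_mul.1 this).elim ihx ihy
  | inv x _ ih => rwa [orderOf_inv]

variable [Finite G] [IsCyclic G]

theorem mem_zpowers_of_orderOf_dvd {x y : G} (h : orderOf y ∣ orderOf x) :
    y ∈ Subgroup.zpowers x := by
  have hker : Subgroup.zpowers x = (powMonoidHom (orderOf x) : G →* G).ker := by
    refine Subgroup.eq_of_le_of_card_ge ?_ ?_
    · rw [Subgroup.zpowers_le, MonoidHom.mem_ker]
      exact pow_orderOf_eq_one x
    · rw [IsCyclic.card_powMonoidHom_ker, Nat.gcd_eq_right (orderOf_dvd_natCard x),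
        Nat.card_zpowers]
  rw [hker]
  exact orderOf_dvd_iff_pow_eq_one.1 h

theorem exists_prime_gt_pow_eq_of_orderOf_eq {x y : G} (h : orderOf x = orderOf y) (m : ℕ) :
    ∃ q > m, q.Prime ∧ x ^ q = y := by
  have hy : y ∈ Submonoid.powers x :=
    mem_powers_iff_mem_zpowers.2 (mem_zpowers_of_orderOf_dvd h.symm.dvd)
  obtain ⟨k, rfl⟩ := hy
  have hx := orderOf_pos x
  have hk : k.Coprime (orderOf x) := by
    rw [orderOf_pow, eq_comm, Nat.div_eq_self] at h
    exact Nat.coprime_comm.1 (h.resolve_left hx.ne')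
  obtain ⟨q, hqm, hq, hqk⟩ := Nat.forall_exists_prime_gt_and_modEq m hx.ne' hk
  exact ⟨q, hqm, hq, pow_eq_pow_iff_modEq.2 hqk⟩

end CommGroup

/-! ### Powers in integral group rings modulo a prime -/

section MonoidAlgebra

variable {G : Type*} [Group G] [Fintype G]

theorem coeff_clsum_s19 (U : Set G) (x : G) : (clsum U).coeff x = U.indicator 1 x := by
  classical
  simp [clsum, MonoidAlgebra.of_apply, Finsupp.single_apply, Set.indicator_apply]

theorem coeff_mul_eq_sum {R : Type*} [Semiring R] (f g : MonoidAlgebra R G) (x : G) :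
    (f * g).coeff x = ∑ y, f.coeff y * g.coeff (y⁻¹ * x) := by
  rw [MonoidAlgebra.coeff_mul_apply_left]
  exact Finsupp.sum_fintype _ _ fun y ↦ zero_mul _

theorem coeff_clsum_mul_clsum_s19 (U V : Set G) (x : G) :
    (clsum U * clsum V).coeff x = (U ∩ x • V⁻¹).ncard := by
  classical
  have hmem (y : G) : y ∈ x • V⁻¹ ↔ y⁻¹ * x ∈ V := by
    rw [Set.mem_smul_set_iff_inv_smul_mem, Set.mem_inv, smul_eq_mul, mul_inv_rev, inv_inv]
  simp only [coeff_mul_eq_sum, coeff_clsum_s19, Set.indicator_apply, Pi.one_apply, ← hmem,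
    ite_zero_mul_ite_zero, mul_one, ← Set.mem_inter_iff]
  rw [Finset.sum_boole, Set.ncard_eq_toFinset_card', Set.filter_mem_univ_eq_toFinset]

end MonoidAlgebra

section PowFiber

variable {G : Type*} [CommGroup G] [Fintype G] [DecidableEq G]

theorem intCast_coeff_pow_prime {p : ℕ} (hp : p.Prime) (f : MonoidAlgebra ℤ G) (x : G) :
    ((f ^ p).coeff x : ZMod p) = ∑ u with u ^ p = x, (f.coeff u : ZMod p) := by
  have := Fact.mk hp
  have : CharP (MonoidAlgebra (ZMod p) G) p :=
    charP_of_injective_algebraMap (FaithfulSMul.algebraMap_injective (ZMod p) _) p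
  set F := MonoidAlgebra.mapRingHom G (Int.castRingHom (ZMod p)) f with hF
  have hsum : F = ∑ u, MonoidAlgebra.single u (f.coeff u : ZMod p) := by
    ext u
    simp [hF, Finsupp.single_apply]
  have hpow : F ^ p = ∑ u, MonoidAlgebra.single (u ^ p) (f.coeff u : ZMod p) := by
    simp only [hsum, sum_pow_char, MonoidAlgebra.single_pow, ZMod.pow_card]
  calc ((f ^ p).coeff x : ZMod p) = (F ^ p).coeff x := by simp [hF, ← map_pow]
    _ = ∑ u with u ^ p = x, (f.coeff u : ZMod p) := by
      simp [hpow, MonoidAlgebra.coeff_sum, Finsupp.single_apply, Finset.sum_ite]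

omit [Fintype G] [DecidableEq G] in
theorem intCast_coeff_pow_prime_of_not_dvd_card [Finite G] {p : ℕ} (hp : p.Prime)
    (hpG : ¬ p ∣ Nat.card G) (f : MonoidAlgebra ℤ G) (u : G) :
    ((f ^ p).coeff (u ^ p) : ZMod p) = f.coeff u := by
  classical
  have := Fintype.ofFinite G
  have hinj : Function.Injective fun v : G ↦ v ^ p :=
    (powCoprime (hp.coprime_iff_not_dvd.2 hpG).symm).injective
  rw [intCast_coeff_pow_prime hp]
  refine Finset.sum_eq_single_of_mem u (by simp) fun v hv hne ↦ ?_
  exact absurd (hinj (Finset.mem_filter.1 hv).2) hne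

theorem sum_pow_eq_eq_sum_pow_eq_one {M : Type*} [AddCommMonoid M] (F : G → M) {n : ℕ}
    {x y : G} (hy : y ^ n = x) :
    ∑ u with u ^ n = x, F u = ∑ z with z ^ n = 1, F (y * z) := by
  refine Finset.sum_bij' (fun u _ ↦ y⁻¹ * u) (fun z _ ↦ y * z) ?_ ?_ ?_ ?_ ?_ <;>
    simp +contextual [mul_pow, hy]

variable [IsCyclic G]

theorem card_filter_pow_eq_one {n : ℕ} (hn : n ∣ Nat.card G) :
    (Finset.univ.filter fun z : G ↦ z ^ n = 1).card = n := by
  calc (Finset.univ.filter fun z : G ↦ z ^ n = 1).card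
      = Nat.card (powMonoidHom n : G →* G).ker := by
        rw [← Fintype.card_subtype, ← Nat.card_eq_fintype_card]
        rfl
    _ = n := by rw [IsCyclic.card_powMonoidHom_ker, Nat.gcd_eq_right hn]

variable {R : Type*} [CommRing R] {p : ℕ} [CharP R p] {F : G → R}

theorem sum_pow_eq_of_dvd_orderOf (hp : p.Prime)
    (hF : ∀ x y, orderOf x = orderOf y → F x = F y) {x : G} (hx : p ∣ orderOf x) :
    ∑ u with u ^ p = x, F u = 0 := by
  by_cases hroot : ∃ y, y ^ p = x
  · obtain ⟨y, rfl⟩ := hroot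
    have hord (u : G) (hu : u ^ p = y ^ p) : orderOf u = p * orderOf (y ^ p) := by
      rw [← hu] at hx ⊢
      exact orderOf_eq_mul_orderOf_pow hp.ne_zero (hx.trans (orderOf_pow_dvd p))
    have hconst : ∀ z ∈ Finset.univ.filter (fun z : G ↦ z ^ p = 1), F (y * z) = F y := by
      intro z hz
      refine hF _ _ ((hord _ ?_).trans (hord y rfl).symm)
      rw [mul_pow, (Finset.mem_filter.1 hz).2, mul_one]
    rw [sum_pow_eq_eq_sum_pow_eq_one F rfl, Finset.sum_congr rfl hconst, Finset.sum_const,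
      card_filter_pow_eq_one (hx.trans (orderOf_dvd_natCard _)), nsmul_eq_mul,
      CharP.cast_eq_zero, zero_mul]
  · rw [Finset.filter_false_of_mem fun u _ hu ↦ hroot ⟨u, hu⟩, Finset.sum_empty]

theorem sum_pow_eq_of_not_dvd_orderOf (hp : p.Prime)
    (hF : ∀ x y, orderOf x = orderOf y → F x = F y) {x e : G} (he : orderOf e = p)
    (hx : ¬ p ∣ orderOf x) : ∑ u with u ^ p = x, F u = F x - F (x * e) := by
  obtain ⟨y, hy, hyx⟩ := exists_pow_prime_eq_of_not_dvd_orderOf hp hx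
  have hmul (z : G) (hz : z ^ p = 1) (hz₁ : z ≠ 1) : F (y * z) = F (x * e) := by
    have he₁ : e ≠ 1 := fun h ↦ hp.ne_one (by rw [← he, h, orderOf_one])
    refine hF _ _ ?_
    rw [orderOf_mul_of_pow_prime_eq_one hp (hyx ▸ hx) hz hz₁,
      orderOf_mul_of_pow_prime_eq_one hp hx (he ▸ pow_orderOf_eq_one e) he₁, hyx]
  have hone : (1 : G) ∈ Finset.univ.filter fun z : G ↦ z ^ p = 1 := by simp
  have hconst : ∀ z ∈ (Finset.univ.filter fun z : G ↦ z ^ p = 1).erase 1,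
      F (y * z) = F (x * e) := fun z hz ↦
    hmul z (Finset.mem_filter.1 (Finset.mem_of_mem_erase hz)).2 (Finset.ne_of_mem_erase hz)
  rw [sum_pow_eq_eq_sum_pow_eq_one F hy, ← Finset.add_sum_erase _ _ hone,
    Finset.sum_congr rfl hconst, Finset.sum_const, Finset.card_erase_of_mem hone,
    card_filter_pow_eq_one (he ▸ orderOf_dvd_natCard e), mul_one, hF y x hyx, nsmul_eq_mul,
    Nat.cast_sub hp.one_le, CharP.cast_eq_zero]
  ring

end PowFiber

/-! ### Graded Schur rings -/

/-- Elements of `ℤH` whose coefficients are constant along the relation `r`. -/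
def IsClassFun {H : Type*} [Group H] (r : H → H → Prop) (f : MonoidAlgebra ℤ H) : Prop :=
  ∀ ⦃x y⦄, r x y → f.coeff x = f.coeff y

theorem isClassFun_clsum {H : Type*} [Group H] [Fintype H] {r : H → H → Prop} {U : Set H} :
    IsClassFun r (clsum U) ↔ ∀ ⦃x y⦄, r x y → (x ∈ U ↔ y ∈ U) := by
  classical
  have (x y : H) : (clsum U).coeff x = (clsum U).coeff y ↔ (x ∈ U ↔ y ∈ U) := by
    by_cases hx : x ∈ U <;> by_cases hy : y ∈ U <;> simp [coeff_clsum_s19, hx, hy]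
  simp only [IsClassFun, this]

/-- A Schur ring over `H × C₂` containing the sum of `H`, with both cosets of `H` identified
with `H`. Every basic set lies in one of the two layers; `rel i x y` says that `x` and `y`, placed
in the layer `i`, lie in a common basic set. Only the equivalence relation generated by `rel i`
matters, so `rel i` itself is not required to be one. -/
structure GradedSchurRing (H : Type*) [CommGroup H] where
  rel : ZMod 2 → H → H → Prop
  inv_rel : ∀ {i x y}, rel i x y → rel i x⁻¹ y⁻¹
  one_rel : ∀ {x y}, rel 0 x y → (x = 1 ↔ y = 1)
  isClassFun_mul : ∀ {i j f g}, IsClassFun (rel i) f → IsClassFun (rel j) g →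
    IsClassFun (rel (i + j)) (f * g)

namespace GradedSchurRing

variable {H : Type*} [CommGroup H] (A : GradedSchurRing H) {i j : ZMod 2} {U V : Set H}

/-- `U`, placed in the layer `i`, is a union of basic sets. -/
def IsASet (i : ZMod 2) (U : Set H) : Prop :=
  ∀ ⦃x y⦄, A.rel i x y → (x ∈ U ↔ y ∈ U)

/-- `U`, placed in the layer `i`, is a basic set. Since `rel i` need not be an equivalence
relation, minimality is encoded as constancy on `U` of all class functions for `rel i`. -/
structure IsBasicSet (i : ZMod 2) (U : Set H) : Prop where
  isASet : A.IsASet i U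
  nonempty : U.Nonempty
  coeff_eq : ∀ {f}, IsClassFun (A.rel i) f → ∀ {x y}, x ∈ U → y ∈ U → f.coeff x = f.coeff y

variable {A}

namespace IsASet

theorem isClassFun [Fintype H] (hU : A.IsASet i U) : IsClassFun (A.rel i) (clsum U) :=
  isClassFun_clsum.2 hU

theorem union (hU : A.IsASet i U) (hV : A.IsASet i V) : A.IsASet i (U ∪ V) :=
  fun _ _ h ↦ or_congr (hU h) (hV h)

theorem inter (hU : A.IsASet i U) (hV : A.IsASet i V) : A.IsASet i (U ∩ V) :=
  fun _ _ h ↦ and_congr (hU h) (hV h)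

variable [Finite H]

theorem mul (hU : A.IsASet i U) (hV : A.IsASet j V) : A.IsASet (i + j) (U * V) := by
  have := Fintype.ofFinite H
  have hmem (x : H) : x ∈ U * V ↔ (clsum U * clsum V).coeff x ≠ 0 := by
    rw [coeff_clsum_mul_clsum_s19, Nat.cast_ne_zero, Ne, Set.ncard_eq_zero,
      ← Ne, ← Set.nonempty_iff_ne_empty]
    simp only [Set.Nonempty, Set.mem_inter_iff, Set.mem_smul_set_iff_inv_smul_mem, Set.mem_inv,
      smul_eq_mul, mul_inv_rev, inv_inv, Set.mem_mul, ← eq_inv_mul_iff_mul_eq, exists_eq_right]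
  intro x y h
  rw [hmem, hmem, A.isClassFun_mul hU.isClassFun hV.isClassFun h]

theorem stabilizer (hU : A.IsASet i U) : A.IsASet 0 (MulAction.stabilizer H U : Set H) := by
  have := Fintype.ofFinite H
  have hinv : A.IsASet i U⁻¹ := fun _ _ h ↦ hU (A.inv_rel h)
  have hmem (x : H) : x ∈ MulAction.stabilizer H U ↔
      (clsum U * clsum U⁻¹).coeff x = U.ncard := by
    have hcard : (x • U).ncard = U.ncard := Set.ncard_smul_set x U
    rw [coeff_clsum_mul_clsum_s19, inv_inv, Nat.cast_inj, MulAction.mem_stabilizer_iff]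
    constructor
    · intro h
      rw [h, Set.inter_self]
    · intro h
      have hsub := Set.eq_of_subset_of_ncard_le (Set.inter_subset_left (t := x • U)) h.ge
      exact (Set.eq_of_subset_of_ncard_le (Set.inter_eq_left.1 hsub) hcard.le).symm
  intro x y h
  rw [← CharTwo.add_self_eq_zero i] at h
  rw [SetLike.mem_coe, SetLike.mem_coe, hmem, hmem,
    A.isClassFun_mul hU.isClassFun hinv.isClassFun h]

theorem pow (hU : A.IsASet 0 U) (n : ℕ) : A.IsASet 0 (U ^ n) := by
  induction n with
  | zero => exact fun _ _ h ↦ by simpa only [pow_zero, Set.mem_one] using A.one_rel h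
  | succ n ih => simpa only [pow_succ, add_zero] using ih.mul hU

theorem closure (hU : A.IsASet 0 U) : A.IsASet 0 (Subgroup.closure U : Set H) := by
  have hmem (x : H) : x ∈ Subgroup.closure U ↔ ∃ n, x ∈ U ^ n := by
    rw [← Subgroup.mem_toSubmonoid, Subgroup.closure_toSubmonoid_of_finite]
    refine ⟨fun hx ↦ ?_, fun ⟨n, hn⟩ ↦ Submonoid.pow_subset Submonoid.subset_closure hn⟩
    induction hx using Submonoid.closure_induction with
    | mem x hx => exact ⟨1, by rwa [pow_one]⟩
    | one => exact ⟨0, by simp only [pow_zero, Set.mem_one]⟩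
    | mul x y _ _ hx hy =>
      obtain ⟨m, hm⟩ := hx
      obtain ⟨n, hn⟩ := hy
      exact ⟨m + n, pow_add U m n ▸ Set.mul_mem_mul hm hn⟩
  intro x y h
  simp only [SetLike.mem_coe, hmem, hU.pow _ h]

end IsASet

theorem IsBasicSet.smul_subset_iff [Finite H] (hU : A.IsBasicSet i U) {V : Subgroup H}
    (hV : A.IsASet 0 (V : Set H)) {x y : H} (hx : x ∈ U) (hy : y ∈ U) :
    x • (V : Set H) ⊆ U ↔ y • (V : Set H) ⊆ U := by
  have := Fintype.ofFinite H
  have hiff (z : H) : z • (V : Set H) ⊆ U ↔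
      (clsum U * clsum (V : Set H)).coeff z = (V : Set H).ncard := by
    have hcard : (z • (V : Set H)).ncard = (V : Set H).ncard := Set.ncard_smul_set z _
    rw [coeff_clsum_mul_clsum_s19, inv_coe_set, Nat.cast_inj, ← hcard, ← Set.inter_eq_right]
    exact ⟨fun h ↦ by rw [h], fun h ↦ Set.eq_of_subset_of_ncard_le Set.inter_subset_right h.ge⟩
  have hmul : IsClassFun (A.rel i) (clsum U * clsum (V : Set H)) := by
    simpa only [add_zero] using A.isClassFun_mul hU.isASet.isClassFun hV.isClassFun
  rw [hiff, hiff, hU.coeff_eq hmul hx hy]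

end GradedSchurRing

/-- `U` is a union of classes of elements of equal order. In a cyclic group these are the sets
invariant under all automorphisms. -/
def IsRational {H : Type*} [Group H] (U : Set H) : Prop :=
  ∀ ⦃x y⦄, orderOf x = orderOf y → x ∈ U → y ∈ U

/-- The elements of order prime to `p := orderOf e` outside `U` that multiplication by `e` moves
into `U`. When `p` is an odd prime and `U` a basic set of degree `1` containing `1` and `e`, these
are the elements at which the coefficient of `(clsum U) ^ p` is not divisible by `p`. -/
def shadow {H : Type*} [Group H] (e : H) (U : Set H) : Set H :=
  {x | ¬ orderOf e ∣ orderOf x ∧ x ∉ U ∧ x * e ∈ U}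

namespace IsRational

variable {H : Type*} [CommGroup H] [IsCyclic H] {U : Set H}

theorem eq_coe_subgroup_of_sq_eq_one [Finite H] (hU : IsRational U) (hone : 1 ∈ U)
    (hsq : ∀ x ∈ U, x ^ 2 = 1) : ∃ M : Subgroup H, U = M := by
  by_cases htriv : ∀ x ∈ U, x = 1
  · exact ⟨⊥, Set.ext fun x ↦ ⟨htriv x, fun hx ↦ Subgroup.mem_bot.1 hx ▸ hone⟩⟩
  · push Not at htriv
    obtain ⟨x, hxU, hx₁⟩ := htriv
    have hx : orderOf x = 2 := orderOf_eq_prime (hsq x hxU) hx₁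
    refine ⟨Subgroup.zpowers x, Set.ext fun y ↦ ⟨fun hy ↦ ?_, fun hy ↦ ?_⟩⟩
    · exact mem_zpowers_of_orderOf_dvd (hx ▸ orderOf_dvd_of_pow_eq_one (hsq y hy))
    · have hdvd : orderOf y ∣ 2 := hx ▸ orderOf_dvd_of_mem_zpowers hy
      rcases (Nat.dvd_prime Nat.prime_two).1 hdvd with hy₁ | hy₂
      · exact orderOf_eq_one_iff.1 hy₁ ▸ hone
      · exact hU (hx.trans hy₂.symm) hxU

theorem intCast_coeff_clsum_pow [Fintype H] (hU : IsRational U) {e : H} {p : ℕ}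
    (hp : p.Prime) (he : orderOf e = p) (x : H) : ((clsum U ^ p).coeff x : ZMod p) =
      if p ∣ orderOf x then 0 else U.indicator 1 x - U.indicator 1 (x * e) := by
  classical
  have hF (x y : H) (h : orderOf x = orderOf y) :
      (U.indicator 1 x : ZMod p) = U.indicator 1 y := by
    have hxy : x ∈ U ↔ y ∈ U := ⟨fun hx ↦ hU h hx, fun hy ↦ hU h.symm hy⟩
    simp only [Set.indicator_apply, hxy, Pi.one_apply]
  have hcast (u : H) : ((clsum U).coeff u : ZMod p) = U.indicator 1 u := by
    rw [coeff_clsum_s19]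
    simp only [Set.indicator_apply, Pi.one_apply, Int.cast_ite, Int.cast_one, Int.cast_zero]
  simp only [intCast_coeff_pow_prime hp, hcast]
  split_ifs with hx
  · exact sum_pow_eq_of_dvd_orderOf hp hF hx
  · exact sum_pow_eq_of_not_dvd_orderOf hp hF he hx

theorem intCast_coeff_clsum_pow_ne_zero_iff [Fintype H] (hU : IsRational U) {e : H} {p : ℕ}
    (hp : p.Prime) (he : orderOf e = p) (x : H) :
    ((clsum U ^ p).coeff x : ZMod p) ≠ 0 ↔ ¬ p ∣ orderOf x ∧ ¬ (x ∈ U ↔ x * e ∈ U) := by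
  have := Fact.mk hp
  rw [hU.intCast_coeff_clsum_pow hp he]
  by_cases hx : p ∣ orderOf x <;> by_cases hxU : x ∈ U <;> by_cases hxeU : x * e ∈ U <;>
    simp [hx, hxU, hxeU]

end IsRational

namespace GradedSchurRing

variable {H : Type*} [CommGroup H] {A : GradedSchurRing H} {U : Set H}

theorem isClassFun_pow {i : ZMod 2} {f : MonoidAlgebra ℤ H} (hf : IsClassFun (A.rel i) f)
    (n : ℕ) : IsClassFun (A.rel (n • i)) (f ^ n) := by
  induction n with
  | zero =>
    intro x y h
    classical
    rw [zero_nsmul] at h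
    simp [MonoidAlgebra.one_def, Finsupp.single_apply, eq_comm (a := (1 : H)), A.one_rel h]
  | succ n ih => simpa only [succ_nsmul, pow_succ] using A.isClassFun_mul ih hf

theorem IsASet.isClassFun_pow_of_odd [Fintype H] (hU : A.IsASet 1 U) {n : ℕ} (hn : Odd n) :
    IsClassFun (A.rel 1) (clsum U ^ n) := by
  have := isClassFun_pow hU.isClassFun n
  rwa [nsmul_one, ZMod.natCast_eq_one_iff_odd.2 hn] at this

namespace IsBasicSet

section

variable [Finite H] [IsCyclic H] (hU : A.IsBasicSet 1 U) (hone : 1 ∈ U)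
include hU hone

-- Schur's theorem on multipliers: modulo a prime `q` not dividing `|H|`, `(clsum U) ^ q` is the
-- sum of the `q`-th powers of the elements of `U`.
theorem isRational : IsRational U := by
  have := Fintype.ofFinite H
  intro x y hxy hx
  obtain ⟨q, hqH, hq, rfl⟩ := exists_prime_gt_pow_eq_of_orderOf_eq hxy.symm (Nat.card H + 1)
  have := Fact.mk hq
  have hqH : ¬ q ∣ Nat.card H := Nat.not_dvd_of_pos_of_lt Nat.card_pos (by omega)
  have hodd : Odd q := hq.odd_of_ne_two (by have := Nat.card_pos (α := H); omega)
  have hcoeff := hU.coeff_eq (hU.isASet.isClassFun_pow_of_odd hodd) hx hone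
  have hmod : ((clsum U).coeff y : ZMod q) = (clsum U).coeff 1 := by
    rw [← intCast_coeff_pow_prime_of_not_dvd_card hq hqH (clsum U) y, hcoeff,
      ← intCast_coeff_pow_prime_of_not_dvd_card hq hqH (clsum U) 1, one_pow]
  by_contra hy
  simp [coeff_clsum_s19, hone, hy] at hmod

variable {e : H} (hp : (orderOf e).Prime) (hodd : Odd (orderOf e))
include hp hodd

theorem not_dvd_orderOf_of_notMem (he : e ∉ U) {x : H} (hx : x ∈ U) :
    ¬ orderOf e ∣ orderOf x := by
  have := Fintype.ofFinite H
  have hrat := hU.isRational hone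
  have hcoeff := hU.coeff_eq (hU.isASet.isClassFun_pow_of_odd hodd) hx hone
  have hx := hrat.intCast_coeff_clsum_pow_ne_zero_iff hp rfl x
  have h₁ := hrat.intCast_coeff_clsum_pow_ne_zero_iff hp rfl 1
  rw [hcoeff, h₁] at hx
  refine (hx.1 ⟨?_, by simp [hone, he]⟩).1
  simpa only [orderOf_one, Nat.dvd_one] using hp.ne_one

omit [Finite H] in
theorem intCast_coeff_clsum_pow_eq_zero [Fintype H] (he : e ∈ U) {x : H} (hx : x ∈ U) :
    ((clsum U ^ orderOf e).coeff x : ZMod (orderOf e)) = 0 := by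
  rw [hU.coeff_eq (hU.isASet.isClassFun_pow_of_odd hodd) hx hone]
  by_contra hne
  have := ((hU.isRational hone).intCast_coeff_clsum_pow_ne_zero_iff hp rfl 1).1 hne
  simp [hone, he] at this

theorem isASet_shadow (he : e ∈ U) : A.IsASet 1 (shadow e U) := by
  have := Fintype.ofFinite H
  have hmem (x : H) : x ∈ shadow e U ↔
      ((clsum U ^ orderOf e).coeff x : ZMod (orderOf e)) ≠ 0 := by
    by_cases hx : x ∈ U
    · simp [shadow, hx, hU.intCast_coeff_clsum_pow_eq_zero hone hp hodd he hx]
    · rw [(hU.isRational hone).intCast_coeff_clsum_pow_ne_zero_iff hp rfl]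
      simp [shadow, hx]
  intro x y h
  rw [hmem, hmem, hU.isASet.isClassFun_pow_of_odd hodd h]

theorem mul_mem_of_not_dvd_orderOf (he : e ∈ U) {x : H} (hx : x ∈ U)
    (hxe : ¬ orderOf e ∣ orderOf x) : x * e ∈ U := by
  have := Fintype.ofFinite H
  by_contra hne
  refine ((hU.isRational hone).intCast_coeff_clsum_pow_ne_zero_iff hp rfl x).2 ⟨hxe, ?_⟩
    (hU.intCast_coeff_clsum_pow_eq_zero hone hp hodd he hx)
  simp [hx, hne]

theorem mul_mem_union_shadow (he : e ∈ U) {x : H} (hx : x ∈ U) : x * e ∈ U ∪ shadow e U := by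
  have hrat := hU.isRational hone
  by_cases hdvd : orderOf e ∣ orderOf x
  · by_cases hdvd' : orderOf e ∣ orderOf (x * e)
    · refine Or.inl (hrat ?_ hx)
      rw [orderOf_eq_mul_orderOf_pow hp.ne_zero hdvd,
        orderOf_eq_mul_orderOf_pow hp.ne_zero hdvd', mul_pow, pow_orderOf_eq_one, mul_one]
    · have he₁ : e ≠ 1 := fun h ↦ hp.ne_one (orderOf_eq_one_iff.2 h)
      have hord : orderOf (x * e * e⁻¹) = orderOf (x * e * e) := by
        rw [orderOf_mul_of_pow_prime_eq_one hp hdvd' (pow_orderOf_eq_one e) he₁,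
          orderOf_mul_of_pow_prime_eq_one hp hdvd' (by simp [pow_orderOf_eq_one])
            (inv_ne_one.2 he₁)]
      rw [mul_inv_cancel_right] at hord
      exact or_iff_not_imp_left.2 fun hxe ↦ ⟨hdvd', hxe, hrat hord hx⟩
  · exact Or.inl (hU.mul_mem_of_not_dvd_orderOf hone hp hodd he hx hdvd)

theorem mem_stabilizer_union_shadow (he : e ∈ U) :
    e ∈ MulAction.stabilizer H (U ∪ shadow e U) := by
  rw [MulAction.mem_stabilizer_set' (Set.toFinite _)]
  rintro x (hx | hx)
  · simpa only [smul_eq_mul, mul_comm] using hU.mul_mem_union_shadow hone hp hodd he hx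
  · exact Or.inl (by simpa only [smul_eq_mul, mul_comm] using hx.2.2)

end

end IsBasicSet
end GradedSchurRing

/-- `U` is `M` with one coset `c V` of a subgroup `V ≤ M` removed, where `c V` has order two
in `M ⧸ V`. -/
def IsPuncture {H : Type*} [CommGroup H] (M : Subgroup H) (U : Set H) : Prop :=
  ∃ V ≤ M, ∃ c ∈ M, c ∉ V ∧ c ^ 2 ∈ V ∧ U = (M : Set H) \ c • (V : Set H)

namespace IsPuncture

variable {H : Type*} [CommGroup H] {M : Subgroup H} {U : Set H}

theorem two_dvd_card (h : IsPuncture M U) : 2 ∣ Nat.card M := by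
  obtain ⟨V, -, c, hcM, hcV, hc, -⟩ := h
  exact two_dvd_card_of_sq_mem hcM hcV hc

theorem comap {H' : Type*} [CommGroup H'] {f : H' →* H} (hf : Function.Surjective f)
    (h : IsPuncture M U) : IsPuncture (M.comap f) (f ⁻¹' U) := by
  obtain ⟨V, hVM, c, hcM, hcV, hc, rfl⟩ := h
  obtain ⟨d, rfl⟩ := hf c
  refine ⟨V.comap f, Subgroup.comap_mono hVM, d, hcM, hcV, by simpa using hc, ?_⟩
  ext x
  simp [Set.mem_smul_set_iff_inv_smul_mem]

end IsPuncture

namespace GradedSchurRing.IsBasicSet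

variable {H : Type*} [CommGroup H] [Finite H] {A : GradedSchurRing H} {U : Set H}
  (hU : A.IsBasicSet 1 U) (hone : 1 ∈ U)
include hU hone

section

variable {Q : Set H} {e : H} {N : Subgroup H} (hp : (orderOf e).Prime)
  (hQe : ∀ x ∈ Q, ¬ orderOf e ∣ orderOf x) (heN : e ∈ N) (hNUQ : (N : Set H) ⊆ U ∪ Q)
include hp hQe heN hNUQ

theorem coe_subset_of_forall_not_dvd_orderOf {V : Subgroup H} (hV : A.IsASet 0 (V : Set H))
    (hVN : V ≤ N) (hVe : ∀ v ∈ V, ¬ orderOf e ∣ orderOf v) : (V : Set H) ⊆ U := by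
  have heV : e • (V : Set H) ⊆ U := by
    rintro _ ⟨v, hv, rfl⟩
    refine (hNUQ (N.mul_mem heN (hVN hv))).resolve_right fun hevQ ↦ hQe _ hevQ ?_
    have he₁ : e ≠ 1 := fun h ↦ hp.ne_one (orderOf_eq_one_iff.2 h)
    rw [mul_comm, orderOf_mul_of_pow_prime_eq_one hp (hVe v hv) (pow_orderOf_eq_one e) he₁]
    exact dvd_mul_left _ _
  have heU : e ∈ U := heV ⟨1, V.one_mem, mul_one e⟩
  simpa only [one_smul] using (hU.smul_subset_iff hV heU hone).1 heV

theorem isPuncture_inter (hQ : A.IsASet 1 Q) (hN : A.IsASet 0 (N : Set H))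
    (hNU : ¬ (N : Set H) ⊆ U) : IsPuncture N (U ∩ N) := by
  obtain ⟨c, hcN, hcU⟩ := Set.not_subset.1 hNU
  have hcQ : c ∈ Q := (hNUQ hcN).resolve_left hcU
  let V : Subgroup H := Subgroup.closure (Q * Q) ⊓ N
  have hV : A.IsASet 0 (V : Set H) := by
    have hQQ : A.IsASet 0 (Q * Q) := hQ.mul hQ
    exact hQQ.closure.inter hN
  have hVU : (V : Set H) ⊆ U := by
    refine hU.coe_subset_of_forall_not_dvd_orderOf hone hp hQe heN hNUQ hV inf_le_right ?_
    intro v hv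
    have hvQ : v ∈ Subgroup.closure Q :=
      sup_idem (Subgroup.closure Q) ▸ Subgroup.closure_mul_le Q Q hv.1
    exact not_dvd_orderOf_of_mem_closure hp hQe hvQ
  have hmulV {x : H} (hxQ : x ∈ Q) (hxN : x ∈ N) : x * c ∈ V :=
    ⟨Subgroup.subset_closure (Set.mul_mem_mul hxQ hcQ), N.mul_mem hxN hcN⟩
  refine ⟨V, inf_le_right, c, hcN, fun h ↦ hcU (hVU h), sq c ▸ hmulV hcQ hcN, ?_⟩
  have hcoset {x : H} (hxN : x ∈ N) : x ∈ c • (V : Set H) ↔ x ∉ U := by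
    rw [Set.mem_smul_set_iff_inv_smul_mem, smul_eq_mul, SetLike.mem_coe]
    refine ⟨fun hx hxU ↦ hcU ?_, fun hxU ↦ ?_⟩
    · rw [← one_smul H (V : Set H), hU.smul_subset_iff hV hone hxU] at hVU
      refine hVU ⟨(c⁻¹ * x)⁻¹, V.inv_mem hx, ?_⟩
      simp only [smul_eq_mul, mul_inv_rev, inv_inv, mul_inv_cancel_left]
    · have hx := V.mul_mem (hmulV ((hNUQ hxN).resolve_left hxU) hxN) (V.inv_mem (hmulV hcQ hcN))
      rwa [mul_inv_rev, ← mul_assoc, mul_inv_cancel_right, mul_comm] at hx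
  ext x
  simp only [Set.mem_inter_iff, Set.mem_sdiff, SetLike.mem_coe, and_comm (a := x ∈ U)]
  exact and_congr_right fun hxN ↦ by rw [hcoset hxN, not_not]

end

theorem exists_eq_coe_subgroup_of_forall_notMem [IsCyclic H] (h4 : ¬ 4 ∣ Nat.card H)
    (h : ∀ e : H, (orderOf e).Prime → Odd (orderOf e) → e ∉ U) : ∃ M : Subgroup H, U = M := by
  refine (hU.isRational hone).eq_coe_subgroup_of_sq_eq_one hone fun x hx ↦ ?_
  rcases (orderOf x).eq_two_pow_or_exists_odd_prime_and_dvd with ⟨k, hk⟩ | ⟨p, hp, hpx, hodd⟩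
  · have hk2 : k < 2 := by
      by_contra! hk2
      exact h4 ((pow_dvd_pow 2 hk2).trans (hk ▸ orderOf_dvd_natCard x))
    exact orderOf_dvd_iff_pow_eq_one.1 (hk ▸ pow_dvd_pow 2 (Nat.le_of_lt_succ hk2))
  · obtain ⟨e, rfl⟩ : ∃ e : H, orderOf e = p :=
      ⟨_, orderOf_pow_orderOf_div (orderOf_pos x).ne' hpx⟩
    exact absurd hpx (hU.not_dvd_orderOf_of_notMem hone hp hodd (h e hp hodd) hx)

end GradedSchurRing.IsBasicSet

/-! ### Quotients -/

section Pullback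

variable {H : Type*} [CommGroup H] (N : Subgroup H)

theorem sum_comp_quotientGroup_mk {M : Type*} [AddCommMonoid M] [Fintype H] [Fintype (H ⧸ N)]
    (F : H ⧸ N → M) : ∑ x : H, F x = Nat.card N • ∑ q, F q := by
  have := Fintype.ofFinite N
  calc ∑ x : H, F x = ∑ z : (H ⧸ N) × N, F z.1 :=
        Fintype.sum_equiv Subgroup.groupEquivQuotientProdSubgroup _ _ fun _ ↦ rfl
    _ = Nat.card N • ∑ q, F q := by
        simp only [Fintype.sum_prod_type, Finset.sum_const, Finset.card_univ, Finset.smul_sum,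
          Nat.card_eq_fintype_card]

variable [Finite H]

/-- The element of `ℤH` whose coefficients are those of `f` composed with `H → H ⧸ N`. -/
noncomputable def pullback (f : MonoidAlgebra ℤ (H ⧸ N)) : MonoidAlgebra ℤ H :=
  .ofCoeff (Finsupp.equivFunOnFinite.symm fun x ↦ f.coeff x)

theorem coeff_pullback (f : MonoidAlgebra ℤ (H ⧸ N)) (x : H) :
    (pullback N f).coeff x = f.coeff x := rfl

theorem coeff_pullback_mul_pullback (f g : MonoidAlgebra ℤ (H ⧸ N)) (x : H) :
    (pullback N f * pullback N g).coeff x = Nat.card N * (f * g).coeff x := by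
  have := Fintype.ofFinite H
  have := Fintype.ofFinite (H ⧸ N)
  simp only [coeff_mul_eq_sum, coeff_pullback, QuotientGroup.mk_mul, QuotientGroup.mk_inv]
  rw [sum_comp_quotientGroup_mk N fun q ↦ f.coeff q * g.coeff (q⁻¹ * x), nsmul_eq_mul]

end Pullback

namespace GradedSchurRing

variable {H : Type*} [CommGroup H] [Finite H] (A : GradedSchurRing H) {N : Subgroup H}

theorem isClassFun_map_mk {i : ZMod 2} {f : MonoidAlgebra ℤ (H ⧸ N)} :
    IsClassFun (Relation.Map (A.rel i) (↑) (↑)) f ↔ IsClassFun (A.rel i) (pullback N f) := by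
  refine ⟨fun hf x y h ↦ hf ⟨x, y, h, rfl, rfl⟩, ?_⟩
  rintro hf _ _ ⟨x, y, h, rfl, rfl⟩
  exact hf h

/-- The Schur ring induced on `H ⧸ N`: its basic sets are the images of those of `A`. -/
def quotient (hN : A.IsASet 0 (N : Set H)) : GradedSchurRing (H ⧸ N) where
  rel i := Relation.Map (A.rel i) (↑) (↑)
  inv_rel := by
    rintro i _ _ ⟨x, y, h, rfl, rfl⟩
    exact ⟨x⁻¹, y⁻¹, A.inv_rel h, rfl, rfl⟩
  one_rel := by
    rintro _ _ ⟨x, y, h, rfl, rfl⟩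
    simpa only [QuotientGroup.eq_one_iff, SetLike.mem_coe] using hN h
  isClassFun_mul := by
    rintro i j f g hf hg _ _ ⟨x, y, h, rfl, rfl⟩
    have hmul := A.isClassFun_mul (A.isClassFun_map_mk.1 hf) (A.isClassFun_map_mk.1 hg) h
    rw [coeff_pullback_mul_pullback, coeff_pullback_mul_pullback] at hmul
    exact mul_left_cancel₀ (Nat.cast_ne_zero.2 Nat.card_pos.ne') hmul

variable {A}

theorem IsBasicSet.image_mk (hN : A.IsASet 0 (N : Set H)) {i : ZMod 2} {U : Set H}
    (hU : A.IsBasicSet i U) : (A.quotient hN).IsBasicSet i ((↑) '' U) where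
  isASet := by
    rintro _ _ ⟨x, y, h, rfl, rfl⟩
    have hUN : A.IsASet i (U * N) := by simpa only [add_zero] using hU.isASet.mul hN
    rw [← QuotientGroup.preimage_image_mk_eq_mul] at hUN
    exact hUN h
  nonempty := hU.nonempty.image _
  coeff_eq := by
    rintro f hf _ _ ⟨x, hx, rfl⟩ ⟨y, hy, rfl⟩
    exact hU.coeff_eq (A.isClassFun_map_mk.1 hf) hx hy

end GradedSchurRing

section Stabilizer

variable {H : Type*} [CommGroup H] {U : Set H}

theorem coe_stabilizer_subset (hone : 1 ∈ U) : (MulAction.stabilizer H U : Set H) ⊆ U := by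
  intro x hx
  rw [← MulAction.mem_stabilizer_iff.1 hx]
  exact ⟨1, hone, mul_one x⟩

theorem mul_stabilizer_union_eq {Q : Set H} {e : H} (hQ : ∀ x ∈ Q, x * e ∈ U)
    (he : e ∈ MulAction.stabilizer H (U ∪ Q)) :
    U * (MulAction.stabilizer H (U ∪ Q) : Set H) = U ∪ Q := by
  refine (Set.mul_subset_iff.2 fun x hx y hy ↦ ?_).antisymm ?_
  · rw [mul_comm x y, ← MulAction.mem_stabilizer_iff.1 hy]
    exact Set.smul_mem_smul_set (Or.inl hx)
  · rintro x (hx | hx)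
    · exact ⟨x, hx, 1, one_mem _, mul_one x⟩
    · exact ⟨x * e, hQ x hx, e⁻¹, inv_mem he, mul_inv_cancel_right x e⟩

end Stabilizer

namespace GradedSchurRing.IsBasicSet

theorem mul_coe_eq_self {H : Type*} [CommGroup H] [Finite H] {A : GradedSchurRing H}
    {i : ZMod 2} {U : Set H} (hU : A.IsBasicSet i U) (hone : 1 ∈ U) {V : Subgroup H}
    (hV : A.IsASet 0 (V : Set H)) (hVU : (V : Set H) ⊆ U) : U * (V : Set H) = U := by
  refine (Set.mul_subset_iff.2 fun x hx v hv ↦ ?_).antisymm (Set.subset_mul_left U V.one_mem)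
  rw [← one_smul H (V : Set H), hU.smul_subset_iff hV hone hx] at hVU
  exact hVU ⟨v, hv, rfl⟩

theorem isASet_stabilizer_union_shadow {H : Type*} [CommGroup H] [Finite H] [IsCyclic H]
    {A : GradedSchurRing H} {U : Set H} (hU : A.IsBasicSet 1 U) (hone : 1 ∈ U) {e : H}
    (hp : (orderOf e).Prime) (hodd : Odd (orderOf e)) (he : e ∈ U) :
    A.IsASet 0 (MulAction.stabilizer H (U ∪ shadow e U) : Set H) :=
  (hU.isASet.union (hU.isASet_shadow hone hp hodd he)).stabilizer

theorem exists_eq_coe_or_isPuncture_of_image_mk {H : Type*} [CommGroup H] [Finite H] [IsCyclic H]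
    {A : GradedSchurRing H} {U : Set H} (hU : A.IsBasicSet 1 U) (hone : 1 ∈ U)
    (h4 : ¬ 4 ∣ Nat.card H) {e : H} (hp : (orderOf e).Prime) (hodd : Odd (orderOf e)) (he : e ∈ U)
    {M : Subgroup (H ⧸ MulAction.stabilizer H (U ∪ shadow e U))}
    (hM : ((↑) '' U : Set (H ⧸ MulAction.stabilizer H (U ∪ shadow e U))) = M ∨
      IsPuncture M ((↑) '' U)) :
    ∃ M : Subgroup H, U = M ∨ IsPuncture M U := by
  let N := MulAction.stabilizer H (U ∪ shadow e U)
  have hN : A.IsASet 0 (N : Set H) := hU.isASet_stabilizer_union_shadow hone hp hodd he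
  have heN : e ∈ N := hU.mem_stabilizer_union_shadow hone hp hodd he
  by_cases hNU : (N : Set H) ⊆ U
  · have hpre : QuotientGroup.mk' N ⁻¹' ((↑) '' U) = U :=
      (QuotientGroup.preimage_image_mk_eq_mul N U).trans (hU.mul_coe_eq_self hone hN hNU)
    refine ⟨M.comap (QuotientGroup.mk' N), hM.imp (fun h ↦ ?_) fun h ↦ ?_⟩
    · rw [← hpre, h, Subgroup.coe_comap]
    · exact Eq.subst hpre (h.comap (QuotientGroup.mk'_surjective N))
  have hpunct : IsPuncture N (U ∩ N) :=
    hU.isPuncture_inter hone hp (fun x hx ↦ hx.1) heN (coe_stabilizer_subset (Or.inl hone))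
      (hU.isASet_shadow hone hp hodd he) hN hNU
  refine ⟨N, Or.inr ?_⟩
  rcases hM with hM | hM
  · have hpre : (M.comap (QuotientGroup.mk' N) : Set H) = U ∪ shadow e U := by
      rw [Subgroup.coe_comap, ← hM]
      exact (QuotientGroup.preimage_image_mk_eq_mul N U).trans
        (mul_stabilizer_union_eq (fun x hx ↦ hx.2.2) heN)
    have hNM : N = M.comap (QuotientGroup.mk' N) := by
      rw [← MulAction.stabilizer_subgroup (M.comap _), hpre]
    have hUN : U ⊆ N := by
      rw [hNM, hpre]
      exact Set.subset_union_left
    rwa [Set.inter_eq_left.2 hUN] at hpunct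
  · have hM₂ := hM.two_dvd_card.trans M.card_subgroup_dvd_card
    exact absurd (N.card_eq_card_quotient_mul_card_subgroup ▸
      Nat.mul_dvd_mul hM₂ hpunct.two_dvd_card) h4

theorem exists_eq_coe_or_isPuncture.{u} {H : Type u} [CommGroup H] [Finite H] [IsCyclic H]
    {A : GradedSchurRing H} {U : Set H} (hU : A.IsBasicSet 1 U) (hone : 1 ∈ U)
    (h4 : ¬ 4 ∣ Nat.card H) : ∃ M : Subgroup H, U = M ∨ IsPuncture M U := by
  induction hn : Nat.card H using Nat.strong_induction_on generalizing H with
  | _ n ih =>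
  subst hn
  by_cases! hodd : ∀ e : H, (orderOf e).Prime → Odd (orderOf e) → e ∉ U
  · obtain ⟨M, hM⟩ := hU.exists_eq_coe_subgroup_of_forall_notMem hone h4 hodd
    exact ⟨M, Or.inl hM⟩
  obtain ⟨e, hp, hodd, he⟩ := hodd
  let N := MulAction.stabilizer H (U ∪ shadow e U)
  have heN : e ∈ N := hU.mem_stabilizer_union_shadow hone hp hodd he
  have hN₁ : N ≠ ⊥ := fun h ↦ hp.ne_one (orderOf_eq_one_iff.2 (Subgroup.mem_bot.1 (h ▸ heN)))
  have hcard := N.card_eq_card_quotient_mul_card_subgroup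
  have hlt : Nat.card (H ⧸ N) < Nat.card H :=
    hcard ▸ lt_mul_of_one_lt_right Nat.card_pos (N.one_lt_card_iff_ne_bot.2 hN₁)
  obtain ⟨M, hM⟩ := ih _ hlt
    (hU.image_mk (hU.isASet_stabilizer_union_shadow hone hp hodd he)) ⟨1, hone, rfl⟩
    (fun h ↦ h4 (hcard ▸ h.mul_right _)) rfl
  exact hU.exists_eq_coe_or_isPuncture_of_image_mk hone h4 hp hodd he hM

end GradedSchurRing.IsBasicSet

/-! ### Schur rings over `H × C₂` -/

section Layer

variable {H K : Type*} [CommGroup H] [CommGroup K]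

/-- The element `f k` of `ℤ(H × K)`: the copy of `f` supported on the coset `H × {k}`. -/
noncomputable def layer (k : K) (f : MonoidAlgebra ℤ H) : MonoidAlgebra ℤ (H × K) :=
  MonoidAlgebra.mapDomainRingHom ℤ (MonoidHom.inl H K) f * .single (1, k) 1

theorem coeff_layer [DecidableEq K] (k l : K) (f : MonoidAlgebra ℤ H) (x : H) :
    (layer k f).coeff (x, l) = if l = k then f.coeff x else 0 := by
  have hinl : Function.Injective (MonoidHom.inl H K) := fun _ _ h ↦ congr_arg Prod.fst h
  rw [layer, MonoidAlgebra.coeff_mul_single_apply, mul_one]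
  split_ifs with h
  · subst h
    simpa using Finsupp.mapDomain_apply hinl f.coeff x
  · refine Finsupp.mapDomain_of_notMem_range _ _ ?_
    rintro ⟨y, hy⟩
    have hlk : 1 = l * k⁻¹ := by simpa using congr_arg Prod.snd hy
    exact h (mul_inv_eq_one.1 hlk.symm)

theorem layer_mul_layer (k l : K) (f g : MonoidAlgebra ℤ H) :
    layer k f * layer l g = layer (k * l) (f * g) := by
  rw [layer, layer, layer, map_mul, mul_mul_mul_comm, MonoidAlgebra.single_mul_single,
    Prod.mk_mul_mk, mul_one, mul_one]

end Layer

namespace SchurRing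

section

variable {G : Type*} [Group G] [Fintype G] (A : SchurRing G)

theorem eq_of_mem {X Y : Set G} (hX : X ∈ A.P) (hY : Y ∈ A.P) {x : G} (hxX : x ∈ X)
    (hxY : x ∈ Y) : X = Y := by
  by_contra hne
  exact Set.disjoint_left.1 (A.disj X hX Y hY hne) hxX hxY

/-- `x` and `y` lie in a common basic set of `A`. -/
def SameClass (x y : G) : Prop :=
  ∃ X ∈ A.P, x ∈ X ∧ y ∈ X

variable {A}

theorem SameClass.mem_iff {X : Set G} (hX : X ∈ A.P) {x y : G} (h : A.SameClass x y) :
    x ∈ X ↔ y ∈ X := by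
  obtain ⟨Y, hY, hx, hy⟩ := h
  exact ⟨fun hxX ↦ A.eq_of_mem hY hX hx hxX ▸ hy, fun hyX ↦ A.eq_of_mem hY hX hy hyX ▸ hx⟩

variable (A)

theorem mem_span_clsum_iff {f : MonoidAlgebra ℤ G} :
    f ∈ Submodule.span ℤ (clsum '' A.P) ↔ IsClassFun A.SameClass f := by
  constructor
  · intro hf x y h
    induction hf using Submodule.span_induction with
    | mem f hf =>
      obtain ⟨X, hX, rfl⟩ := hf
      exact isClassFun_clsum.2 (fun _ _ ↦ SameClass.mem_iff hX) h
    | zero => rfl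
    | add f g _ _ hf hg => simp only [MonoidAlgebra.coeff_add, Finsupp.add_apply, hf, hg]
    | smul c f _ hf => simp only [MonoidAlgebra.coeff_smul, Finsupp.smul_apply, hf]
  · intro hf
    choose! rep hrep using A.nonempty_cls
    have hsum : f = ∑ X ∈ (Set.toFinite A.P).toFinset, f.coeff (rep X) • clsum X := by
      ext g
      obtain ⟨Y, hY, hgY⟩ := A.cover g
      simp only [MonoidAlgebra.coeff_sum, Finsupp.finsetSum_apply, MonoidAlgebra.coeff_smul,
        Finsupp.smul_apply, coeff_clsum_s19]
      rw [Finset.sum_eq_single_of_mem Y (by simpa)]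
      · simp [hgY, hf ⟨Y, hY, hgY, hrep Y hY⟩]
      · intro X hX hne
        have hgX : g ∉ X := fun hgX ↦ hne (A.eq_of_mem (by simpa using hX) hY hgX hgY)
        simp [hgX]
    rw [hsum]
    exact Submodule.sum_mem _ fun X hX ↦ Submodule.smul_mem _ _ <|
      Submodule.subset_span (Set.mem_image_of_mem _ (by simpa using hX))

theorem isASet_iff_s19 {X : Set G} :
    A.isASet X ↔ ∀ ⦃x y⦄, A.SameClass x y → (x ∈ X ↔ y ∈ X) :=
  A.mem_span_clsum_iff.trans isClassFun_clsum

theorem mul_mem_span_clsum {f g : MonoidAlgebra ℤ G}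
    (hf : f ∈ Submodule.span ℤ (clsum '' A.P)) (hg : g ∈ Submodule.span ℤ (clsum '' A.P)) :
    f * g ∈ Submodule.span ℤ (clsum '' A.P) := by
  have hle : Submodule.span ℤ (clsum '' A.P) * Submodule.span ℤ (clsum '' A.P) ≤
      Submodule.span ℤ (clsum '' A.P) := by
    rw [Submodule.span_mul_span, Submodule.span_le, Set.mul_subset_iff]
    rintro _ ⟨X, hX, rfl⟩ _ ⟨Y, hY, rfl⟩
    exact A.mul_closed X hX Y hY
  exact hle (Submodule.mul_mem_mul hf hg)

end

section

open Multiplicative (ofAdd)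

variable {H : Type*} [CommGroup H] [Fintype H] (A : SchurRing (H × Multiplicative (ZMod 2)))
  (hH : A.isASet (Set.range fun h : H ↦ (h, (1 : Multiplicative (ZMod 2)))))
include hH

variable {A} in
theorem SameClass.snd_eq_snd {x y : H × Multiplicative (ZMod 2)} (h : A.SameClass x y) :
    x.2 = y.2 := by
  have hmem (z : H × Multiplicative (ZMod 2)) :
      z ∈ Set.range (fun h : H ↦ (h, (1 : Multiplicative (ZMod 2)))) ↔ z.2 = 1 := by
    simp [Prod.ext_iff, eq_comm]
  have hone := A.isASet_iff_s19.1 hH h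
  rw [hmem, hmem] at hone
  have htwo : ∀ s t : Multiplicative (ZMod 2), (s = 1 ↔ t = 1) → s = t := by decide
  exact htwo _ _ hone

theorem layer_mem_span_clsum {i : ZMod 2} {f : MonoidAlgebra ℤ H}
    (hf : IsClassFun (fun x y ↦ A.SameClass (x, ofAdd i) (y, ofAdd i)) f) :
    layer (ofAdd i) f ∈ Submodule.span ℤ (clsum '' A.P) := by
  rw [mem_span_clsum_iff]
  rintro ⟨x, s⟩ ⟨y, t⟩ h
  obtain rfl : s = t := h.snd_eq_snd hH
  rw [coeff_layer, coeff_layer]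
  split_ifs with hs
  · exact hf (hs ▸ h)
  · rfl

/-- The graded form of a Schur ring over `H × C₂` that contains the sum of `H`. -/
def toGraded : GradedSchurRing H where
  rel i x y := A.SameClass (x, ofAdd i) (y, ofAdd i)
  inv_rel := by
    rintro i x y ⟨X, hX, hx, hy⟩
    have hi (z : H) : (z⁻¹, ofAdd i)⁻¹ = (z, ofAdd i) := by
      rw [Prod.inv_mk, inv_inv, ← ofAdd_neg, ZMod.neg_eq_self_mod_two]
    refine ⟨X⁻¹, A.inv_mem X hX, ?_, ?_⟩ <;> rwa [Set.mem_inv, hi]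
  one_rel := by
    intro x y h
    have hone := h.mem_iff A.one_mem
    rwa [Set.mem_singleton_iff, Set.mem_singleton_iff, ofAdd_zero, Prod.mk_eq_one,
      Prod.mk_eq_one, and_iff_left rfl, and_iff_left rfl] at hone
  isClassFun_mul := by
    intro i j f g hf hg x y h
    have hmem := A.mul_mem_span_clsum (A.layer_mem_span_clsum hH hf)
      (A.layer_mem_span_clsum hH hg)
    rw [layer_mul_layer, ← ofAdd_add, mem_span_clsum_iff] at hmem
    simpa only [coeff_layer, if_true] using hmem h

theorem isBasicSet_toGraded {i : ZMod 2} {T : Set (H × Multiplicative (ZMod 2))} (hT : T ∈ A.P)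
    {x : H} (hx : (x, ofAdd i) ∈ T) :
    (A.toGraded hH).IsBasicSet i {h | (h, ofAdd i) ∈ T} where
  isASet _ _ h := h.mem_iff hT
  nonempty := ⟨x, hx⟩
  coeff_eq hf _ _ hx hy := hf ⟨T, hT, hx, hy⟩

theorem eq_cosetA {T : Set (H × Multiplicative (ZMod 2))} (hT : T ∈ A.P)
    {x : H} (hx : (x, ofAdd 1) ∈ T) : T = cosetA {h | (h, ofAdd 1) ∈ T} := by
  ext ⟨y, s⟩
  constructor
  · intro hy
    obtain rfl : s = ofAdd 1 := SameClass.snd_eq_snd hH ⟨T, hT, hy, hx⟩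
    exact ⟨y, hy, rfl⟩
  · rintro ⟨z, hz, h⟩
    exact h ▸ hz

end

end SchurRing

section OddComplement

variable {H : Type*} [CommGroup H] {H₀ M : Subgroup H} {b : H} {U : Set H}

theorem mul_mem_iff_of_odd_orderOf {K : Subgroup H} (hb : b ^ 2 = 1) {x : H}
    (hx : Odd (orderOf x)) : x * b ∈ K ↔ x ∈ K ∧ b ∈ K := by
  refine ⟨fun h ↦ ?_, fun h ↦ K.mul_mem h.1 h.2⟩
  have hxK : x ∈ K := by
    refine mem_of_pow_mem_of_coprime_orderOf (Nat.coprime_two_left.2 hx) ?_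
    rw [← mul_one (x ^ 2), ← hb, ← mul_pow]
    exact K.pow_mem h 2
  exact ⟨hxK, (K.mul_mem_cancel_left hxK).1 h⟩

variable (hH₀ : Odd (Nat.card H₀)) (hb : b ^ 2 = 1) (hsup : H₀ ⊔ Subgroup.zpowers b = ⊤)

include hb hsup in
theorem mem_or_exists_mul_eq (x : H) : x ∈ H₀ ∨ ∃ h ∈ H₀, h * b = x := by
  obtain ⟨h, hh, z, hz, rfl⟩ := Subgroup.mem_sup.1 (hsup ▸ Subgroup.mem_top x)
  obtain ⟨k, rfl⟩ := Subgroup.mem_zpowers_iff.1 hz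
  rcases Int.even_or_odd' k with ⟨m, rfl | rfl⟩
  · left
    rwa [zpow_mul, zpow_ofNat, hb, one_zpow, mul_one]
  · exact Or.inr ⟨h, hh, by rw [zpow_add, zpow_mul, zpow_ofNat, hb, one_zpow, one_mul, zpow_one]⟩

include hb hsup in
theorem eq_union_image_mul_right {P Q : Set H} (hPH₀ : P ⊆ H₀) (hQH₀ : Q ⊆ H₀)
    (hP : ∀ h ∈ H₀, h ∈ U ↔ h ∈ P) (hQ : ∀ h ∈ H₀, h * b ∈ U ↔ h ∈ Q) :
    U = P ∪ (· * b) '' Q := by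
  ext x
  constructor
  · intro hx
    rcases mem_or_exists_mul_eq hb hsup x with hx₀ | ⟨h, hh, rfl⟩
    · exact Or.inl ((hP x hx₀).1 hx)
    · exact Or.inr ⟨h, (hQ h hh).1 hx, rfl⟩
  · rintro (hx | ⟨h, hh, rfl⟩)
    · exact (hP x (hPH₀ hx)).2 hx
    · exact (hQ h (hQH₀ hh)).2 hh

include hH₀ hb hsup

theorem le_of_notMem_of_sup_zpowers_eq_top (hbM : b ∉ M) : M ≤ H₀ := by
  intro x hx
  rcases mem_or_exists_mul_eq hb hsup x with hx₀ | ⟨h, hh, rfl⟩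
  · exact hx₀
  · have hodd := hH₀.of_dvd_nat (Subgroup.orderOf_dvd_natCard H₀ hh)
    exact absurd ((mul_mem_iff_of_odd_orderOf hb hodd).1 hx).2 hbM

theorem IsPuncture.exists_eq_union (hU : IsPuncture M U) : ∃ V ≤ M ⊓ H₀,
    U = ((M ⊓ H₀ : Subgroup H) : Set H) ∪ (· * b) '' ((M ⊓ H₀ : Subgroup H) \ (V : Set H)) := by
  obtain ⟨V, hVM, c, hcM, hcV, hc, rfl⟩ := hU
  have hodd {h : H} (hh : h ∈ H₀) : Odd (orderOf h) :=
    hH₀.of_dvd_nat (Subgroup.orderOf_dvd_natCard H₀ hh)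
  have hsq {h : H} (hh : h ∈ H₀) : h ^ 2 ∈ V → h ∈ V :=
    mem_of_pow_mem_of_coprime_orderOf (Nat.coprime_two_left.2 (hodd hh))
  obtain ⟨d, hd, rfl⟩ := (mem_or_exists_mul_eq hb hsup c).resolve_left fun h ↦ hcV (hsq h hc)
  have hdV : d ∈ V := hsq hd (by rwa [mul_pow, hb, mul_one] at hc)
  have hbM : b ∈ M := ((mul_mem_iff_of_odd_orderOf hb (hodd hd)).1 hcM).2
  have hbV : b ∉ V := fun h ↦ hcV (V.mul_mem hdV h)
  have hmem (x : H) : x ∈ (d * b) • (V : Set H) ↔ x * b ∈ V := by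
    have hb' : b⁻¹ = b := inv_eq_of_mul_eq_one_left (sq b ▸ hb)
    rw [Set.mem_smul_set_iff_inv_smul_mem, smul_eq_mul, mul_inv, hb', mul_assoc, mul_comm b x,
      SetLike.mem_coe, V.mul_mem_cancel_left (V.inv_mem hdV)]
  refine ⟨V, le_inf hVM (le_of_notMem_of_sup_zpowers_eq_top hH₀ hb hsup hbV),
    eq_union_image_mul_right hb hsup inf_le_right (Set.sdiff_subset.trans inf_le_right)
      (fun h hh ↦ ?_) fun h hh ↦ ?_⟩
  · simp [hmem, mul_mem_iff_of_odd_orderOf hb (hodd hh), hbV, hh]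
  · simp [hmem, M.mul_mem_cancel_right hbM, mul_assoc, ← sq, hb, hh]

theorem not_four_dvd_card_of_sup_zpowers_eq_top : ¬ 4 ∣ Nat.card H := by
  have hdvd : H₀.index ∣ 2 := by
    rw [← Subgroup.relIndex_top_right, ← hsup, Subgroup.relIndex_sup_left]
    exact (H₀.relIndex_dvd_card _).trans (Nat.card_zpowers b ▸ orderOf_dvd_of_pow_eq_one hb)
  rw [← H₀.card_mul_index]
  intro h
  have h2 := (Nat.Coprime.pow_left 2 (Nat.coprime_two_left.2 hH₀)).dvd_of_dvd_mul_left h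
  exact absurd (Nat.le_of_dvd two_pos (h2.trans hdvd)) (by norm_num)

end OddComplement

theorem stmt19_general {H : Type*} [CommGroup H] [Fintype H] [IsCyclic H] {b : H} (hb : b ^ 2 = 1)
    {H₀ : Subgroup H} (hH₀ : Odd (Nat.card H₀)) (hsup : H₀ ⊔ Subgroup.zpowers b = ⊤)
    (A : SchurRing (H × Multiplicative (ZMod 2)))
    (hH : A.isASet (Set.range fun h : H ↦ (h, (1 : Multiplicative (ZMod 2)))))
    {T : Set (H × Multiplicative (ZMod 2))} (hT : T ∈ A.P)
    (haT : ((1 : H), Multiplicative.ofAdd (1 : ZMod 2)) ∈ T) :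
    (∃ L : Subgroup H, L ≤ H₀ ∧
      (T = cosetA (L : Set H) ∨
       T = cosetA (L : Set H) ∪ cosetA ((fun l => l * b) '' (L : Set H)))) ∨
    (∃ L M : Subgroup H, L < M ∧ M ≤ H₀ ∧
      T = cosetA (M : Set H) ∪
        cosetA ((fun m => m * b) '' ((M : Set H) \ (L : Set H)))) := by
  have hTU := A.eq_cosetA hH hT haT
  obtain ⟨M, hM | hM⟩ := (A.isBasicSet_toGraded hH hT haT).exists_eq_coe_or_isPuncture haT
    (not_four_dvd_card_of_sup_zpowers_eq_top hH₀ hb hsup)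
  · rw [hM] at hTU
    by_cases hbM : b ∈ M
    · refine Or.inl ⟨M ⊓ H₀, inf_le_right, Or.inr ?_⟩
      rw [hTU, cosetA, cosetA, cosetA, ← Set.image_union]
      exact congr_arg _ (eq_union_image_mul_right hb hsup inf_le_right inf_le_right
        (fun h hh ↦ by simp [hh]) fun h hh ↦ by simp [hh, M.mul_mem_cancel_right hbM])
    · exact Or.inl ⟨M, le_of_notMem_of_sup_zpowers_eq_top hH₀ hb hsup hbM, Or.inl hTU⟩
  · obtain ⟨V, hV, hU⟩ := hM.exists_eq_union hH₀ hb hsup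
    rw [hU, cosetA, Set.image_union, ← cosetA, ← cosetA] at hTU
    rcases hV.eq_or_lt with rfl | hV
    · exact Or.inl ⟨_, inf_le_right, Or.inl (by simpa [cosetA] using hTU)⟩
    · exact Or.inr ⟨V, M ⊓ H₀, hV, inf_le_right, hTU⟩

theorem stmt19 {H : Type*} [CommGroup H] [Fintype H] (hcyc : IsCyclic H)
    (n : ℕ) (hn : 1 < n) (hnodd : Odd n) (hcard : Fintype.card H = 2 * n)
    (b : H) (hb : orderOf b = 2)
    (H₀ : Subgroup H) (hH₀ : Nat.card H₀ = n)
    (A : SchurRing (H × Multiplicative (ZMod 2)))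
    (hH : A.isASet (Set.range fun h : H => (h, (1 : Multiplicative (ZMod 2)))))
    (hnota : ¬ A.isASet {((1 : H), Multiplicative.ofAdd (1 : ZMod 2))})
    (T : Set (H × Multiplicative (ZMod 2))) (hT : T ∈ A.P)
    (haT : ((1 : H), Multiplicative.ofAdd (1 : ZMod 2)) ∈ T) :
    (∃ L : Subgroup H, L ≤ H₀ ∧
      (T = cosetA (L : Set H) ∨
       T = cosetA (L : Set H) ∪ cosetA ((fun l => l * b) '' (L : Set H)))) ∨
    (∃ L M : Subgroup H, L < M ∧ M ≤ H₀ ∧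
      T = cosetA (M : Set H) ∪
        cosetA ((fun m => m * b) '' ((M : Set H) \ (L : Set H)))) := by
  have hcompl : H₀.IsComplement' (Subgroup.zpowers b) := by
    refine Subgroup.isComplement'_of_coprime ?_ ?_ <;> rw [Nat.card_zpowers, hb, hH₀]
    · rw [mul_comm, ← hcard, Nat.card_eq_fintype_card]
    · exact Nat.coprime_two_right.2 hnodd
  exact stmt19_general (hb ▸ pow_orderOf_eq_one b) (hH₀ ▸ hnodd) hcompl.sup_eq_top A hH hT haT
end
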